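/- Let σ₃ be the map (w,y,z) ↦ (w·y³/z³, √−1·y, y²/z) on the set T = {(w,y,z) ∈ ℂ³ : w ≠ 0, y ≠ 0, z ≠ 0}. Then σ₃ maps T to itself, σ₃(σ₃(w,y,z)) = (−√−1·w, −y, −z) for all (w,y,z) ∈ T, the fourth iterate of σ₃ equals (w,y,z) ↦ (−w, y, z), and the eighth iterate of σ₃ is the identity on T. Hence σ₃ has order exactly 8 as a permutation of T. -/

import Mathlib

/-- The map `σ₃ : (w, y, z) ↦ (w·y³/z³, √-1·y, y²/z)`. -/
noncomputable def sigma3 : ℂ × ℂ × ℂ → ℂ × ℂ × ℂ :=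
  fun p => (p.1 * p.2.1 ^ 3 / p.2.2 ^ 3, Complex.I * p.2.1, p.2.1 ^ 2 / p.2.2)

/-- The set `T = {(w,y,z) ∈ ℂ³ : w ≠ 0, y ≠ 0, z ≠ 0}`. -/
def Tset : Set (ℂ × ℂ × ℂ) := {p | p.1 ≠ 0 ∧ p.2.1 ≠ 0 ∧ p.2.2 ≠ 0}

theorem sigma3_mem : ∀ p ∈ Tset, sigma3 p ∈ Tset := by
  rintro ⟨w, y, z⟩ ⟨hw, hy, hz⟩
  simp only at hw hy hz
  refine ⟨?_, ?_, ?_⟩ <;> simp [sigma3, hw, hy, hz]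

theorem sigma3_two (w y z : ℂ) (h : (w, y, z) ∈ Tset) :
    sigma3 (sigma3 (w, y, z)) = (-Complex.I * w, -y, -z) := by
  obtain ⟨hw, hy, hz⟩ := h
  simp only at hw hy hz
  have hI := Complex.I_sq
  have hI3 : Complex.I ^ 3 = -Complex.I := by rw [pow_succ, hI]; ring
  simp only [sigma3, Prod.mk.injEq, mul_pow, hI3, hI]
  refine ⟨?_, ?_, ?_⟩
  · field_simp
  · rw [← mul_assoc, ← sq, hI]; ring
  · field_simp

theorem sigma3_four (w y z : ℂ) (h : (w, y, z) ∈ Tset) :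
    sigma3^[4] (w, y, z) = (-w, y, z) := by
  have h2 := sigma3_two w y z h
  have hm : (-Complex.I * w, -y, -z) ∈ Tset := h2 ▸ sigma3_mem _ (sigma3_mem _ h)
  change sigma3 (sigma3 (sigma3 (sigma3 (w, y, z)))) = _
  rw [h2, sigma3_two _ _ _ hm]
  simp [← mul_assoc]

theorem sigma3_eight (w y z : ℂ) (h : (w, y, z) ∈ Tset) :
    sigma3^[8] (w, y, z) = (w, y, z) := by
  have hm : (-w, y, z) ∈ Tset := ⟨neg_ne_zero.mpr h.1, h.2⟩
  rw [show (8 : ℕ) = 4 + 4 from rfl, Function.iterate_add_apply, sigma3_four _ _ _ h,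
    sigma3_four _ _ _ hm, neg_neg]

/-- `σ₃` maps `T` to itself, `σ₃² = (w,y,z) ↦ (-√-1·w, -y, -z)` on `T`, the fourth
iterate of `σ₃` equals `(w,y,z) ↦ (-w, y, z)`, and the eighth iterate of `σ₃` is the
identity on `T`; hence `σ₃` has order exactly 8 as a permutation of `T`. -/
theorem stmt_8 :
    (∀ p ∈ Tset, sigma3 p ∈ Tset) ∧
    (∀ w y z : ℂ, (w, y, z) ∈ Tset →
      sigma3 (sigma3 (w, y, z)) = (-Complex.I * w, -y, -z)) ∧
    (∀ w y z : ℂ, (w, y, z) ∈ Tset → sigma3^[4] (w, y, z) = (-w, y, z)) ∧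
    (∀ p ∈ Tset, sigma3^[8] p = p) := by
  refine ⟨sigma3_mem, sigma3_two, sigma3_four, ?_⟩
  rintro ⟨w, y, z⟩ h
  exact sigma3_eight w y z h

/-- The part of the informal claim not recorded in `stmt_8`: `σ₃` restricts to a
permutation of `T` of order exactly 8. -/
theorem sigma3_order :
    ∃ e : Equiv.Perm Tset, (∀ p : Tset, (e p : ℂ × ℂ × ℂ) = sigma3 p) ∧ orderOf e = 8 := by
  have h8 : ∀ p ∈ Tset, sigma3^[8] p = p := fun p hp => sigma3_eight p.1 p.2.1 p.2.2 hp
  let f : Tset → Tset := fun p => ⟨sigma3 p, sigma3_mem p p.2⟩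
  have hf : ∀ (n : ℕ) (p : Tset), ((f^[n] p : Tset) : ℂ × ℂ × ℂ) = sigma3^[n] p := by
    intro n
    induction n with
    | zero => intro p; rfl
    | succ k ih => intro p; rw [Function.iterate_succ_apply, Function.iterate_succ_apply, ih]
  have hf8 : ∀ p, f^[8] p = p := fun p => Subtype.ext ((hf 8 p).trans (h8 p p.2))
  let e : Equiv.Perm Tset :=
    ⟨f, f^[7], fun p => by rw [← Function.iterate_succ_apply]; exact hf8 p,
      fun p => by rw [← Function.iterate_succ_apply' f]; exact hf8 p⟩
  have he : ∀ (n : ℕ) (p : Tset), (e ^ n) p = f^[n] p := by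
    intro n p
    rw [← Equiv.Perm.iterate_eq_pow]
    rfl
  refine ⟨e, fun p => rfl, ?_⟩
  have : orderOf e = 2 ^ (2 + 1) := by
    apply orderOf_eq_prime_pow
    · intro h
      have hm : ((1, 1, 1) : ℂ × ℂ × ℂ) ∈ Tset := by simp [Tset]
      have h1 : f^[4] ⟨_, hm⟩ = ⟨_, hm⟩ := by
        rw [← he 4]
        have h' : e ^ 4 = 1 := by simpa using h
        rw [h']
        rfl
      have h2 := hf 4 ⟨_, hm⟩
      rw [h1] at h2
      have h3 := h2.symm.trans rfl
      simp only [sigma3_four 1 1 1 hm, Prod.mk.injEq] at h3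
      norm_num at h3
    · ext1 p
      exact (he 8 p).trans (hf8 p)
  simpa using this
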